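/- arXiv:1003.2674 — 3 statements merged into one kernel-verified Lean document; each statement's English description precedes it below -/
import Mathlib

section
/- (Lemma 1) Let F = {f_i : B_i → int(B)} be a locally contractive piecewise continuous map on (B,{B_i}) with separation line S (the separation property is not needed). If there exists an integer k₀ ≥ 1 such that F^{k₀}(B) ∩ S = ∅, then F is finally periodic: there exist at least one and at most finitely many periodic orbits of F whose union equals L⁺(F), and every future orbit of every point of B has one of these periodic orbits as its limit set. -/
/-!
Common definitions for "Topological dynamics of generic piecewise continuous
contractive maps in n dimensions" (Catsigeras–Budelli).

`X` plays the role of the compact set `B ⊆ ℝⁿ` (homeomorphic to a compact ball),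
endowed with a metric `dist` inducing its subspace topology: we model this by a
metric space `X` together with a topological embedding `j : X → ℝⁿ` and a
homeomorphism of `X` with the closed unit ball.
-/

namespace PWC

variable {X : Type} [MetricSpace X]

/-- A finite partition of the space `X` (the ball `B`): `m` nonempty compact pieces
covering `X`, with pairwise disjoint interiors. -/
def IsFinPartition {m : ℕ} (P : Fin m → Set X) : Prop :=
  (∀ i, (P i).Nonempty) ∧ (∀ i, IsCompact (P i)) ∧ (⋃ i, P i) = Set.univ ∧
    ∀ i j : Fin m, i ≠ j → interior (P i) ∩ interior (P j) = ∅

/-- The separation line `S = ⋃ i ∂B_i` (frontiers taken in `B`). -/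
def sepLine {m : ℕ} (P : Fin m → Set X) : Set X := ⋃ i, frontier (P i)

/-- A piecewise continuous map on `(B, {B_i})`: each `f i` is a homeomorphism of the
piece `P i` onto its image, and the image is contained in the interior of `B`
(i.e. of `Set.range j`) in `ℝⁿ`. -/
def IsPCMap {n m : ℕ} (j : X → EuclideanSpace ℝ (Fin n)) (P : Fin m → Set X)
    (f : Fin m → X → X) : Prop :=
  ∀ i, ContinuousOn (f i) (P i) ∧ Set.InjOn (f i) (P i) ∧
    (∃ finv : X → X, ContinuousOn finv (f i '' P i) ∧ ∀ x ∈ P i, finv (f i x) = x) ∧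
    ∀ x ∈ P i, j (f i x) ∈ interior (Set.range j)

/-- The separation property: different continuity pieces have disjoint images. -/
def SepProp {m : ℕ} (P : Fin m → Set X) (f : Fin m → X → X) : Prop :=
  ∀ i i' : Fin m, i ≠ i' → (f i '' P i) ∩ (f i' '' P i') = ∅

/-- `F` is uniformly locally contractive with contraction rate `lam ∈ (0,1)`. -/
def LocContr {m : ℕ} (P : Fin m → Set X) (f : Fin m → X → X) (lam : ℝ) : Prop :=
  0 < lam ∧ lam < 1 ∧ ∀ i, ∀ x ∈ P i, ∀ y ∈ P i, dist (f i x) (f i y) ≤ lam * dist x y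

/-- Image of a set: `F(H) = ⋃_{x ∈ H} {f i x : x ∈ B_i}`. -/
def setImage {m : ℕ} (P : Fin m → Set X) (f : Fin m → X → X) (H : Set X) : Set X :=
  ⋃ i, f i '' (P i ∩ H)

/-- Iterated image: `F⁰(H) = H`, `F^{k+1}(H) = F^k(F(H)) = F(F^k(H))`. -/
def iterSet {m : ℕ} (P : Fin m → Set X) (f : Fin m → X → X) : ℕ → Set X → Set X
  | 0, H => H
  | k + 1, H => setImage P f (iterSet P f k H)

/-- A future orbit: `o (k+1) ∈ F (o k)` for all `k`. -/
def IsOrbit {m : ℕ} (P : Fin m → Set X) (f : Fin m → X → X) (o : ℕ → X) : Prop :=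
  ∀ k : ℕ, ∃ i, o k ∈ P i ∧ o (k + 1) = f i (o k)

/-- The limit set of a sequence: points which are limits of some subsequence. -/
def orbitLimit (o : ℕ → X) : Set X :=
  {y | ∃ φ : ℕ → ℕ, StrictMono φ ∧ Filter.Tendsto (fun k => o (φ k)) Filter.atTop (nhds y)}

/-- The limit set `L⁺(F)`: union of the limit sets of all future orbits of all points. -/
def limitSet {m : ℕ} (P : Fin m → Set X) (f : Fin m → X → X) : Set X :=
  ⋃ o ∈ {o : ℕ → X | IsOrbit P f o}, orbitLimit o

/-- `L` is a periodic orbit (limit cycle) of minimal period `p ≥ 1` of `F`. -/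
def IsPeriodicOrbit {m : ℕ} (P : Fin m → Set X) (f : Fin m → X → X) (L : Set X)
    (p : ℕ) : Prop :=
  1 ≤ p ∧ ∃ o : ℕ → X, IsOrbit P f o ∧ (∀ k, o (k + p) = o k) ∧
    (∀ q : ℕ, 1 ≤ q → (∀ k, o (k + q) = o k) → p ≤ q) ∧ L = Set.range o

/-- `F` is finally periodic: its limit set is the union of (at least one and) finitely
many periodic orbits. -/
def FinallyPeriodic {m : ℕ} (P : Fin m → Set X) (f : Fin m → X → X) : Prop :=
  ∃ (N : ℕ) (L : Fin N → Set X) (p : Fin N → ℕ), 1 ≤ N ∧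
    (∀ a, IsPeriodicOrbit P f (L a) (p a)) ∧ limitSet P f = ⋃ a, L a

/-- `G = {g_i : A_i → B}` (with contraction rate `lamG`) is an `ε`-perturbation of
`F = {f_i : B_i → B}` (with contraction rate `lamF`). -/
def IsPerturbation {m : ℕ} (P : Fin m → Set X) (f : Fin m → X → X) (lamF : ℝ)
    (Q : Fin m → Set X) (g : Fin m → X → X) (lamG : ℝ) (ε : ℝ) : Prop :=
  (∀ i, ∀ x ∈ P i ∩ Q i, dist (f i x) (g i x) < ε) ∧ |lamF - lamG| < ε ∧
    ∀ i, Metric.hausdorffDist (P i) (Q i) < ε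

/-- The limit cycles `L a` (of periods `p a`) of `F` are persistent. -/
def PersistentCycles {n m : ℕ} (j : X → EuclideanSpace ℝ (Fin n)) (P : Fin m → Set X)
    (f : Fin m → X → X) (lamF : ℝ) {N : ℕ} (L : Fin N → Set X) (p : Fin N → ℕ) : Prop :=
  ∀ εs : ℝ, 0 < εs → ∃ ε : ℝ, 0 < ε ∧
    ∀ (Q : Fin m → Set X) (g : Fin m → X → X) (lamG : ℝ),
      IsFinPartition Q → IsPCMap j Q g → LocContr Q g lamG →
      IsPerturbation P f lamF Q g lamG ε →
      ∃ LG : Fin N → Set X, (∀ a, IsPeriodicOrbit Q g (LG a) (p a)) ∧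
        limitSet Q g = (⋃ a, LG a) ∧ ∀ a, Metric.hausdorffDist (LG a) (L a) < εs

/-- `F` is finally periodic with persistent limit cycles. -/
def FPwithPersistent {n m : ℕ} (j : X → EuclideanSpace ℝ (Fin n)) (P : Fin m → Set X)
    (f : Fin m → X → X) (lamF : ℝ) : Prop :=
  ∃ (N : ℕ) (L : Fin N → Set X) (p : Fin N → ℕ), 1 ≤ N ∧
    (∀ a, IsPeriodicOrbit P f (L a) (p a)) ∧ limitSet P f = (⋃ a, L a) ∧
    PersistentCycles j P f lamF L p

/-- The atom of generation `w.length` with word `w`; the head of the list is the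
*last* map applied, i.e. `atom [i_k, …, i_1] = f_{i_k} ∘ ⋯ ∘ f_{i_1} (B_{i_1})`,
restricted to the set where the composition is defined. -/
def atom {m : ℕ} (P : Fin m → Set X) (f : Fin m → X → X) : List (Fin m) → Set X
  | [] => Set.univ
  | i :: w => f i '' (P i ∩ atom P f w)

end PWC


open PWC

/-!
Let `K = F^{k₀}(B)`, a compact forward invariant set. Off the separation line every point lies in
the interior of exactly one piece, so `F` induces a single-valued map `g : K → K`, and a Lebesgue
number `ε` of the cover of `K` by the interiors of the pieces makes `g` contract any two points at
distance less than `ε`.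

By compactness some iterate `g^s x` is arbitrarily close to its own image under a power `g^p`. As
`g^p` contracts at scale `ε`, the proof of Banach's fixed point theorem yields a fixed point `z` of
`g^p` within `ε` of `g^s x`, and the orbit of `x` is then asymptotic to that of `z`. Two distinct
periodic points are never closer than `ε`, so compactness leaves only finitely many of them.
-/

namespace PWC

open Filter Function Set Topology

section UniformlyLocallyContractive

/-- A uniformly locally contractive map in the sense of Edelstein: it contracts by the factor `lam`
the distance of any two points closer than `ε`. This is what remains of `LocContr` for the map
induced by `F` on a compact set avoiding the separation line. -/
structure IsUniformlyLocallyContractive {Y : Type*} [PseudoMetricSpace Y] (g : Y → Y)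
    (ε lam : ℝ) : Prop where
  radius_pos : 0 < ε
  rate_nonneg : 0 ≤ lam
  rate_lt_one : lam < 1
  dist_map_le : ∀ x y, dist x y < ε → dist (g x) (g y) ≤ lam * dist x y

lemma exists_lt_dist_lt {Y : Type*} [PseudoMetricSpace Y] [CompactSpace Y] (u : ℕ → Y)
    {ε : ℝ} (hε : 0 < ε) : ∃ s t, s < t ∧ dist (u s) (u t) < ε := by
  obtain ⟨_, φ, hφ, hlim⟩ := CompactSpace.tendsto_subseq u
  obtain ⟨N, hN⟩ := Metric.cauchySeq_iff.1 hlim.cauchySeq ε hε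
  exact ⟨φ N, φ (N + 1), hφ N.lt_succ_self, hN N le_rfl (N + 1) N.le_succ⟩

namespace IsUniformlyLocallyContractive

section PseudoMetricSpace

variable {Y : Type*} [PseudoMetricSpace Y] {g : Y → Y} {ε lam : ℝ} {x y : Y}

lemma dist_map_le_dist (hc : IsUniformlyLocallyContractive g ε lam) (hd : dist x y < ε) :
    dist (g x) (g y) ≤ dist x y :=
  (hc.dist_map_le x y hd).trans (mul_le_of_le_one_left dist_nonneg hc.rate_lt_one.le)

lemma continuous (hc : IsUniformlyLocallyContractive g ε lam) : Continuous g :=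
  Metric.continuous_iff.2 fun _ η hη =>
    ⟨min ε η, lt_min hc.radius_pos hη, fun _ hd =>
      (hc.dist_map_le_dist (hd.trans_le (min_le_left _ _))).trans_lt
        (hd.trans_le (min_le_right _ _))⟩

lemma dist_iterate_le (hc : IsUniformlyLocallyContractive g ε lam) (hd : dist x y < ε) (n : ℕ) :
    dist (g^[n] x) (g^[n] y) ≤ lam ^ n * dist x y := by
  induction n with
  | zero => simp
  | succ n ih =>
    have hclose : dist (g^[n] x) (g^[n] y) < ε :=
      (ih.trans (mul_le_of_le_one_left dist_nonneg
        (pow_le_one₀ hc.rate_nonneg hc.rate_lt_one.le))).trans_lt hd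
    rw [iterate_succ_apply', iterate_succ_apply']
    calc dist (g (g^[n] x)) (g (g^[n] y))
        ≤ lam * dist (g^[n] x) (g^[n] y) := hc.dist_map_le _ _ hclose
      _ ≤ lam * (lam ^ n * dist x y) := mul_le_mul_of_nonneg_left ih hc.rate_nonneg
      _ = lam ^ (n + 1) * dist x y := by ring

lemma tendsto_dist_iterate (hc : IsUniformlyLocallyContractive g ε lam) (hd : dist x y < ε) :
    Tendsto (fun n => dist (g^[n] x) (g^[n] y)) atTop (𝓝 0) := by
  have hgeo : Tendsto (fun n : ℕ => lam ^ n * dist x y) atTop (𝓝 0) := by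
    simpa only [zero_mul] using
      (tendsto_pow_atTop_nhds_zero_of_lt_one hc.rate_nonneg hc.rate_lt_one).mul_const (dist x y)
  exact squeeze_zero (fun _ => dist_nonneg) (hc.dist_iterate_le hd) hgeo

lemma iterate (hc : IsUniformlyLocallyContractive g ε lam) {p : ℕ} (hp : p ≠ 0) :
    IsUniformlyLocallyContractive g^[p] ε lam where
  radius_pos := hc.radius_pos
  rate_nonneg := hc.rate_nonneg
  rate_lt_one := hc.rate_lt_one
  dist_map_le _ _ hd := (hc.dist_iterate_le hd p).trans <| mul_le_mul_of_nonneg_right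
    (pow_le_of_le_one hc.rate_nonneg hc.rate_lt_one.le hp) dist_nonneg

end PseudoMetricSpace

variable {Y : Type*} [MetricSpace Y] {g : Y → Y} {ε lam : ℝ} {x y : Y}

lemma eq_of_isFixedPt (hc : IsUniformlyLocallyContractive g ε lam) (hx : IsFixedPt g x)
    (hy : IsFixedPt g y) (hd : dist x y < ε) : x = y := by
  have hle : dist x y ≤ lam * dist x y := by
    simpa only [hx.eq, hy.eq] using hc.dist_map_le x y hd
  have hlam := hc.rate_lt_one
  exact dist_le_zero.1 (by nlinarith)

lemma eq_of_mem_periodicPts (hc : IsUniformlyLocallyContractive g ε lam) (hx : x ∈ periodicPts g)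
    (hy : y ∈ periodicPts g) (hd : dist x y < ε) : x = y := by
  obtain ⟨p, hp, hpx⟩ := hx
  obtain ⟨q, hq, hqy⟩ := hy
  exact (hc.iterate (Nat.mul_pos hp hq).ne').eq_of_isFixedPt (hpx.mul_const q) (hqy.const_mul p) hd

lemma finite_periodicPts [CompactSpace Y] (hc : IsUniformlyLocallyContractive g ε lam) :
    (periodicPts g).Finite := by
  by_contra hinf
  let u := Set.Infinite.natEmbedding (periodicPts g) hinf
  obtain ⟨s, t, hst, hd⟩ := exists_lt_dist_lt (fun n => (u n : Y)) hc.radius_pos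
  have heq : u s = u t :=
    Subtype.ext (hc.eq_of_mem_periodicPts (u s).2 (u t).2 hd)
  exact hst.ne (u.injective heq)

lemma exists_isFixedPt_dist_lt [CompleteSpace Y] (hc : IsUniformlyLocallyContractive g ε lam)
    (hy : dist y (g y) < ε * (1 - lam)) : ∃ z, IsFixedPt g z ∧ dist y z < ε := by
  have hlam : 0 < 1 - lam := sub_pos.2 hc.rate_lt_one
  have hyε : dist y (g y) < ε :=
    hy.trans_le (mul_le_of_le_one_right hc.radius_pos.le (sub_le_self 1 hc.rate_nonneg))
  have hstep (n : ℕ) : dist (g^[n] y) (g^[n + 1] y) ≤ dist y (g y) * lam ^ n := by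
    rw [iterate_succ_apply, mul_comm]
    exact hc.dist_iterate_le hyε n
  obtain ⟨z, hz⟩ := cauchySeq_tendsto_of_complete
    (cauchySeq_of_le_geometric lam _ hc.rate_lt_one hstep)
  refine ⟨z, isFixedPt_of_tendsto_iterate hz hc.continuous.continuousAt, ?_⟩
  calc dist y z
      ≤ dist y (g y) / (1 - lam) :=
        dist_le_of_le_geometric_of_tendsto₀ lam _ hc.rate_lt_one hstep hz
    _ < ε := (div_lt_iff₀ hlam).2 hy

lemma exists_mem_periodicPts_dist_iterate_lt [CompactSpace Y]
    (hc : IsUniformlyLocallyContractive g ε lam) (x : Y) :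
    ∃ z ∈ periodicPts g, ∃ s, dist (g^[s] x) z < ε := by
  obtain ⟨s, t, hst, hd⟩ := exists_lt_dist_lt (fun n => g^[n] x)
    (mul_pos hc.radius_pos (sub_pos.2 hc.rate_lt_one))
  obtain ⟨p, hp, rfl⟩ : ∃ p, 0 < p ∧ t = p + s := ⟨t - s, by omega, by omega⟩
  rw [iterate_add_apply] at hd
  obtain ⟨z, hz, hsz⟩ := (hc.iterate hp.ne').exists_isFixedPt_dist_lt hd
  exact ⟨z, mk_mem_periodicPts hp hz, s, hsz⟩

end IsUniformlyLocallyContractive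

end UniformlyLocallyContractive

lemma finite_range_of_periodic {α : Type*} {u : ℕ → α} {p : ℕ} (hp : 0 < p) (hu : u.Periodic p) :
    (range u).Finite := by
  refine ((finite_Iio p).image u).subset ?_
  rintro _ ⟨k, rfl⟩
  exact ⟨k % p, Nat.mod_lt _ hp, hu.map_mod_nat k⟩

section OrbitLimit

variable {X : Type} [MetricSpace X] {o u : ℕ → X} {y : X}

lemma mem_orbitLimit_iff_mapClusterPt : y ∈ orbitLimit o ↔ MapClusterPt y atTop o := by
  refine ⟨?_, MapClusterPt.tendsto_subseq⟩
  rintro ⟨φ, hφ, hlim⟩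
  exact hlim.mapClusterPt.of_comp hφ.tendsto_atTop

lemma orbitLimit_shift (o : ℕ → X) (c : ℕ) : orbitLimit (fun n => o (n + c)) = orbitLimit o := by
  ext y
  have hmap : map (fun n => o (n + c)) atTop = map o atTop := by
    rw [← comp_def o, ← map_map, map_add_atTop_eq_nat]
  rw [mem_orbitLimit_iff_mapClusterPt, mem_orbitLimit_iff_mapClusterPt, mapClusterPt_def,
    mapClusterPt_def, hmap]

lemma orbitLimit_congr_dist (h : Tendsto (fun n => dist (o n) (u n)) atTop (𝓝 0)) :
    orbitLimit o = orbitLimit u := by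
  ext y
  exact exists_congr fun φ => and_congr_right fun hφ =>
    tendsto_iff_of_dist (h.comp hφ.tendsto_atTop)

lemma orbitLimit_subset_closure_range (o : ℕ → X) : orbitLimit o ⊆ closure (range o) := by
  rintro y ⟨φ, -, hlim⟩
  exact mem_closure_of_tendsto hlim (Eventually.of_forall fun k => mem_range_self (φ k))

lemma orbitLimit_eq_range_of_periodic {p : ℕ} (hp : 0 < p) (hu : u.Periodic p) :
    orbitLimit u = range u := by
  refine Subset.antisymm ?_ ?_
  · simpa only [(finite_range_of_periodic hp hu).isClosed.closure_eq] using
      orbitLimit_subset_closure_range u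
  · rintro _ ⟨k, rfl⟩
    rw [mem_orbitLimit_iff_mapClusterPt, mapClusterPt_iff_frequently]
    intro s hs
    refine frequently_atTop.2 fun N => ⟨k + N * p, ?_, ?_⟩
    · exact (Nat.le_mul_of_pos_right N hp).trans (Nat.le_add_left _ k)
    · have hk : u (k + N * p) = u k := by simpa only [smul_eq_mul] using hu.nsmul N k
      exact hk ▸ mem_of_mem_nhds hs

lemma limitSet_eq_iUnion {m : ℕ} {P : Fin m → Set X} {f : Fin m → X → X} {ι : Sort*}
    {L : ι → Set X} (hlim : ∀ o, IsOrbit P f o → ∃ a, orbitLimit o = L a)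
    (horb : ∀ a, ∃ o, IsOrbit P f o ∧ orbitLimit o = L a) : limitSet P f = ⋃ a, L a := by
  refine Subset.antisymm (iUnion₂_subset fun o ho => ?_) (iUnion_subset fun a => ?_)
  · obtain ⟨a, ha⟩ := hlim o ho
    exact ha ▸ subset_iUnion L a
  · obtain ⟨o, ho, ha⟩ := horb a
    exact ha ▸ subset_biUnion_of_mem (u := orbitLimit) ho

end OrbitLimit

section IteratedImage

variable {X : Type} {m : ℕ} {P : Fin m → Set X} {f : Fin m → X → X} {H H' : Set X}

lemma mem_setImage {i : Fin m} {x : X} (hi : x ∈ P i) (hx : x ∈ H) : f i x ∈ setImage P f H :=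
  mem_iUnion.2 ⟨i, mem_image_of_mem (f i) ⟨hi, hx⟩⟩

lemma setImage_mono (h : H ⊆ H') : setImage P f H ⊆ setImage P f H' :=
  iUnion_mono fun _ => image_mono (inter_subset_inter_right _ h)

lemma setImage_iterSet_subset (hH : setImage P f H ⊆ H) (k : ℕ) :
    setImage P f (iterSet P f k H) ⊆ iterSet P f k H := by
  induction k with
  | zero => exact hH
  | succ k ih => exact setImage_mono ih

lemma IsOrbit.mem_iterSet {o : ℕ → X} (ho : IsOrbit P f o) (h0 : o 0 ∈ H) (k : ℕ) :
    o k ∈ iterSet P f k H := by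
  induction k with
  | zero => exact h0
  | succ k ih =>
    obtain ⟨i, hi, hnext⟩ := ho k
    exact hnext ▸ mem_setImage hi ih

lemma IsOrbit.shift {o : ℕ → X} (ho : IsOrbit P f o) (c : ℕ) : IsOrbit P f fun n => o (n + c) :=
  fun n => by simpa only [Nat.add_right_comm n 1 c] using ho (n + c)

lemma isCompact_iterSet [MetricSpace X] (hP : ∀ i, IsClosed (P i))
    (hf : ∀ i, ContinuousOn (f i) (P i)) (hH : IsCompact H) (k : ℕ) :
    IsCompact (iterSet P f k H) := by
  induction k with
  | zero => exact hH
  | succ k ih =>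
    exact isCompact_iUnion fun i =>
      (ih.inter_left (hP i)).image_of_continuousOn ((hf i).mono inter_subset_left)

end IteratedImage

section Partition

variable {X : Type} [MetricSpace X] {m : ℕ} {P : Fin m → Set X} {f : Fin m → X → X} {lam : ℝ}
  {x : X}

lemma LocContr.continuousOn (hlc : LocContr P f lam) (i : Fin m) : ContinuousOn (f i) (P i) :=
  (LipschitzOnWith.of_dist_le_mul (K := ⟨lam, hlc.1.le⟩) (hlc.2.2 i)).continuousOn

lemma IsFinPartition.exists_mem (hP : IsFinPartition P) (x : X) : ∃ i, x ∈ P i :=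
  iUnion_eq_univ_iff.1 hP.2.2.1 x

lemma IsFinPartition.compactSpace (hP : IsFinPartition P) : CompactSpace X :=
  isCompact_univ_iff.1 (hP.2.2.1 ▸ isCompact_iUnion hP.2.1)

lemma IsFinPartition.exists_isOrbit (hP : IsFinPartition P) (x : X) :
    ∃ o, IsOrbit P f o ∧ o 0 = x := by
  choose ι hι using hP.exists_mem
  exact ⟨fun n => (fun y => f (ι y) y)^[n] x,
    fun n => ⟨_, hι _, iterate_succ_apply' _ n x⟩, rfl⟩

lemma mem_interior_of_notMem_sepLine {i : Fin m} (hx : x ∉ sepLine P) (hi : x ∈ P i) :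
    x ∈ interior (P i) :=
  by_contra fun hnot => hx (mem_iUnion.2 ⟨i, subset_closure hi, hnot⟩)

lemma IsFinPartition.eq_of_notMem_sepLine (hP : IsFinPartition P) (hx : x ∉ sepLine P)
    {i i' : Fin m} (hi : x ∈ P i) (hi' : x ∈ P i') : i = i' :=
  by_contra fun hne => (hP.2.2.2 i i' hne).le
    ⟨mem_interior_of_notMem_sepLine hx hi, mem_interior_of_notMem_sepLine hx hi'⟩

end Partition

section InducedMap

section Orbit

variable {X : Type} {m : ℕ} {P : Fin m → Set X} {f : Fin m → X → X} {K : Set X} {g : K → K}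

/-- `F` is single-valued on `K` and leaves it invariant, with `F(x) = {g x}` for `x ∈ K`; the
existential below spells out `y ∈ F(x)`. -/
def IsInducedMap (P : Fin m → Set X) (f : Fin m → X → X) {K : Set X} (g : K → K) : Prop :=
  ∀ (x : K) (y : X), (∃ i, ↑x ∈ P i ∧ y = f i x) ↔ y = g x

/-- The orbit of a point under a self-map `g` of the subset `K`, viewed as a sequence in the ambient
space, where the orbits of `F` live. -/
def forwardOrbit (g : K → K) (z : K) (n : ℕ) : X := g^[n] z

lemma periodic_forwardOrbit_iff {z : K} {q : ℕ} :
    (forwardOrbit g z).Periodic q ↔ IsPeriodicPt g q z := by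
  refine ⟨fun h => Subtype.ext ?_, fun h n => congrArg Subtype.val ?_⟩
  · simpa only [forwardOrbit, zero_add, iterate_zero_apply] using h 0
  · rw [iterate_add_apply, h.eq]

lemma IsInducedMap.isOrbit_forwardOrbit (hg : IsInducedMap P f g) (z : K) :
    IsOrbit P f (forwardOrbit g z) := fun n =>
  (hg (g^[n] z) _).2 (congrArg Subtype.val (iterate_succ_apply' g n z))

lemma IsInducedMap.isPeriodicOrbit (hg : IsInducedMap P f g) {z : K} (hz : z ∈ periodicPts g) :
    IsPeriodicOrbit P f (range (forwardOrbit g z)) (minimalPeriod g z) :=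
  ⟨minimalPeriod_pos_of_mem_periodicPts hz, forwardOrbit g z, hg.isOrbit_forwardOrbit z,
    periodic_forwardOrbit_iff.2 (isPeriodicPt_minimalPeriod g z),
    fun _ hq h => (periodic_forwardOrbit_iff.1 h).minimalPeriod_le hq, rfl⟩

lemma IsInducedMap.eq_forwardOrbit (hg : IsInducedMap P f g) {o : ℕ → X} (ho : IsOrbit P f o)
    {z : K} (h0 : o 0 = z) : o = forwardOrbit g z := by
  funext n
  induction n with
  | zero => exact h0
  | succ n ih =>
    have hnext : ∃ i, forwardOrbit g z n ∈ P i ∧ o (n + 1) = f i (forwardOrbit g z n) :=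
      ih ▸ ho n
    exact ((hg (g^[n] z) _).1 hnext).trans
      (congrArg Subtype.val (iterate_succ_apply' g n z).symm)

end Orbit

variable {X : Type} [MetricSpace X] {m : ℕ} {P : Fin m → Set X} {f : Fin m → X → X} {lam ε : ℝ}
  {K : Set X} {g : K → K}

lemma IsFinPartition.exists_isInducedMap (hP : IsFinPartition P) (hKS : Disjoint K (sepLine P))
    (hinv : setImage P f K ⊆ K) : ∃ g : K → K, IsInducedMap P f g := by
  choose ι hι using hP.exists_mem
  refine ⟨fun x => ⟨f (ι x) x, hinv (mem_setImage (hι x) x.2)⟩, fun x y => ⟨?_, ?_⟩⟩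
  · rintro ⟨i, hi, rfl⟩
    rw [hP.eq_of_notMem_sepLine (hKS.notMem_of_mem_left x.2) hi (hι x)]
  · rintro rfl
    exact ⟨ι x, hι x, rfl⟩

lemma IsInducedMap.exists_isUniformlyLocallyContractive (hg : IsInducedMap P f g)
    (hlc : LocContr P f lam) (hK : IsCompact K) (hKS : Disjoint K (sepLine P)) :
    ∃ ε, IsUniformlyLocallyContractive g ε lam := by
  have hcover : K ⊆ ⋃ i, interior (P i) := fun x hx => by
    obtain ⟨i, hi, -⟩ := (hg ⟨x, hx⟩ _).2 rfl
    exact mem_iUnion.2 ⟨i, mem_interior_of_notMem_sepLine (hKS.notMem_of_mem_left hx) hi⟩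
  obtain ⟨ε, hε, hleb⟩ := lebesgue_number_lemma_of_metric hK (fun _ => isOpen_interior) hcover
  refine ⟨ε, hε, hlc.1.le, hlc.2.1, fun x y hd => ?_⟩
  obtain ⟨i, hball⟩ := hleb x x.2
  have hx : ↑x ∈ P i := interior_subset (hball (Metric.mem_ball_self hε))
  have hy : ↑y ∈ P i := interior_subset (hball (Metric.mem_ball'.2 hd))
  rw [Subtype.dist_eq, ← (hg x _).1 ⟨i, hx, rfl⟩, ← (hg y _).1 ⟨i, hy, rfl⟩]
  exact hlc.2.2 i x hx y hy

lemma orbitLimit_forwardOrbit {z : K} (hz : z ∈ periodicPts g) :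
    orbitLimit (forwardOrbit g z) = range (forwardOrbit g z) :=
  orbitLimit_eq_range_of_periodic (minimalPeriod_pos_of_mem_periodicPts hz)
    (periodic_forwardOrbit_iff.2 (isPeriodicPt_minimalPeriod g z))

lemma IsInducedMap.exists_orbitLimit_eq_range [CompactSpace K] (hg : IsInducedMap P f g)
    (hc : IsUniformlyLocallyContractive g ε lam) {o : ℕ → X} (ho : IsOrbit P f o) {k : ℕ}
    (hk : o k ∈ K) : ∃ z ∈ periodicPts g, orbitLimit o = range (forwardOrbit g z) := by
  obtain ⟨z, hz, s, hd⟩ := hc.exists_mem_periodicPts_dist_iterate_lt ⟨o k, hk⟩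
  have htail : (fun n => o (n + k)) = forwardOrbit g ⟨o k, hk⟩ :=
    hg.eq_forwardOrbit (ho.shift k) (congrArg o (zero_add k))
  have hasymp : Tendsto (fun n => dist (forwardOrbit g ⟨o k, hk⟩ (n + s)) (forwardOrbit g z n))
      atTop (𝓝 0) :=
    (hc.tendsto_dist_iterate hd).congr fun n => by
      rw [← iterate_add_apply, Subtype.dist_eq, forwardOrbit, forwardOrbit]
  refine ⟨z, hz, ?_⟩
  calc orbitLimit o
      = orbitLimit (forwardOrbit g ⟨o k, hk⟩) := by rw [← orbitLimit_shift o k, htail]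
    _ = orbitLimit (fun n => forwardOrbit g ⟨o k, hk⟩ (n + s)) := (orbitLimit_shift _ s).symm
    _ = orbitLimit (forwardOrbit g z) := orbitLimit_congr_dist hasymp
    _ = range (forwardOrbit g z) := orbitLimit_forwardOrbit hz

end InducedMap

end PWC

theorem finally_periodic_of_eventually_disjoint_from_sepLine_general
    {m : ℕ} {X : Type} [MetricSpace X] [Nonempty X]
    (P : Fin m → Set X) (f : Fin m → X → X) (lamF : ℝ)
    (hP : IsFinPartition P) (hlc : LocContr P f lamF)
    (k₀ : ℕ) (hdisj : iterSet P f k₀ Set.univ ∩ sepLine P = ∅) :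
    ∃ (N : ℕ) (L : Fin N → Set X) (p : Fin N → ℕ), 1 ≤ N ∧
      (∀ a, IsPeriodicOrbit P f (L a) (p a)) ∧
      limitSet P f = (⋃ a, L a) ∧
      ∀ o : ℕ → X, IsOrbit P f o → ∃ a, orbitLimit o = L a := by
  have := hP.compactSpace
  have hK : IsCompact (iterSet P f k₀ Set.univ) :=
    isCompact_iterSet (fun i => (hP.2.1 i).isClosed) hlc.continuousOn isCompact_univ k₀
  have := isCompact_iff_compactSpace.1 hK
  have hKS := Set.disjoint_iff_inter_eq_empty.2 hdisj
  obtain ⟨g, hg⟩ := hP.exists_isInducedMap hKS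
    (setImage_iterSet_subset (f := f) (Set.subset_univ _) k₀)
  obtain ⟨ε, hc⟩ := hg.exists_isUniformlyLocallyContractive hlc hK hKS
  obtain ⟨N, z, -, hz⟩ := hc.finite_periodicPts.fin_param
  have hper (a : Fin N) : z a ∈ Function.periodicPts g := hz ▸ Set.mem_range_self a
  have hlim (o : ℕ → X) (ho : IsOrbit P f o) :
      ∃ a, orbitLimit o = Set.range (forwardOrbit g (z a)) := by
    obtain ⟨w, hw, how⟩ := hg.exists_orbitLimit_eq_range hc ho (ho.mem_iterSet (Set.mem_univ _) k₀)
    obtain ⟨a, rfl⟩ := hz.ge hw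
    exact ⟨a, how⟩
  obtain ⟨o, ho, -⟩ := hP.exists_isOrbit (f := f) (Classical.arbitrary X)
  obtain ⟨a, -⟩ := hlim o ho
  exact ⟨N, fun a => Set.range (forwardOrbit g (z a)), fun a => Function.minimalPeriod g (z a),
    a.pos, fun a => hg.isPeriodicOrbit (hper a),
    limitSet_eq_iUnion hlim fun a =>
      ⟨_, hg.isOrbit_forwardOrbit (z a), orbitLimit_forwardOrbit (hper a)⟩, hlim⟩

/-- Lemma 1: If `F^{k₀}(B) ∩ S = ∅` for some `k₀ ≥ 1`, then `F` is
finally periodic: there are at least one and at most finitely many periodic orbits whose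
union is `L⁺(F)`, and every future orbit of every point has one of them as its limit set. -/
theorem finally_periodic_of_eventually_disjoint_from_sepLine
    {n m : ℕ} {X : Type} [MetricSpace X]
    (j : X → EuclideanSpace ℝ (Fin n))
    (hj : Topology.IsEmbedding j)
    (hball : Nonempty (X ≃ₜ (Metric.closedBall (0 : EuclideanSpace ℝ (Fin n)) 1)))
    (hfr : ∀ (M : Set X) (y : X), y ∉ M →
      Metric.infDist y M = Metric.infDist y (frontier M))
    (P : Fin m → Set X) (f : Fin m → X → X) (lamF : ℝ)
    (hP : IsFinPartition P) (hf : IsPCMap j P f) (hlc : LocContr P f lamF)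
    (k₀ : ℕ) (hk₀ : 1 ≤ k₀)
    (hdisj : iterSet P f k₀ Set.univ ∩ sepLine P = ∅) :
    ∃ (N : ℕ) (L : Fin N → Set X) (p : Fin N → ℕ), 1 ≤ N ∧
      (∀ a, IsPeriodicOrbit P f (L a) (p a)) ∧
      limitSet P f = (⋃ a, L a) ∧
      ∀ o : ℕ → X, IsOrbit P f o → ∃ a, orbitLimit o = L a := by
  obtain ⟨e⟩ := hball
  have : Nonempty X := ⟨e.symm ⟨0, Metric.mem_closedBall_self zero_le_one⟩⟩
  exact finally_periodic_of_eventually_disjoint_from_sepLine_general P f lamF hP hlc k₀ hdisj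
end

section
/- (Proposition, second part) Let P = {B_i}_{1≤i≤m} and P̂ = {A_i}_{1≤i≤m} be finite partitions of B with the same number m of pieces, with separation lines S = ∪_i ∂B_i and Ŝ = ∪_i ∂A_i. If d(P,P̂) < ε, then for all i ≠ j such that B_i ∩ A_j ≠ ∅ and for every point p ∈ B_i ∩ A_j, one has dist(p, S) < ε and dist(p, Ŝ) < ε. -/
open PWC

/-!
A point `x ∈ P i ∩ Q i'` is at distance at most `hausdorffDist (Q i') (P i')` from `P i'`. If
`x ∉ P i'`, the frontier property of the metric replaces `P i'` by its frontier. If `x ∈ P i'`,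
then `x` lies in two pieces of `P` with disjoint interiors, hence on the frontier of one of them.
The bound for the other separation line follows by exchanging the roles of the two partitions.
-/

theorem inter_subset_frontier_union_frontier {X : Type*} [TopologicalSpace X] {A B : Set X}
    (hAB : Disjoint (interior A) (interior B)) : A ∩ B ⊆ frontier A ∪ frontier B := by
  rintro x ⟨hxA, hxB⟩
  by_cases hx : x ∈ interior A
  · exact .inr ⟨subset_closure hxB, hAB.notMem_of_mem_left hx⟩
  · exact .inl ⟨subset_closure hxA, hx⟩

section PseudoMetricSpace

open Metric

variable {X : Type*} [PseudoMetricSpace X]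

/- Since `infDist x ∅ = 0`, an empty frontier would put `x` at distance zero from the set `M`,
which would then be clopen. -/
theorem frontier_nonempty_of_infDist_eq {M : Set X} {x : X} (hM : M.Nonempty) (hx : x ∉ M)
    (hfr : infDist x M = infDist x (frontier M)) : (frontier M).Nonempty := by
  by_contra! hempty
  have hclosed : IsClosed M := (isClopen_iff_frontier_eq_empty.2 hempty).isClosed
  have hpos : 0 < infDist x M := (hclosed.notMem_iff_infDist_pos hM).1 hx
  rw [hfr, hempty, infDist_empty] at hpos
  exact hpos.false

variable {ι : Type*}

theorem infDist_iUnion_frontier_le_infDist {A : ι → Set X} {i k : ι} {x : X}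
    (hint : Disjoint (interior (A i)) (interior (A k))) (hx : x ∈ A i) (hk : (A k).Nonempty)
    (hfr : x ∉ A k → infDist x (A k) = infDist x (frontier (A k))) :
    infDist x (⋃ l, frontier (A l)) ≤ infDist x (A k) := by
  have hsub (l : ι) : frontier (A l) ⊆ ⋃ l, frontier (A l) :=
    Set.subset_iUnion (fun l => frontier (A l)) l
  by_cases hxk : x ∈ A k
  · have hmem : x ∈ ⋃ l, frontier (A l) :=
      Set.union_subset (hsub i) (hsub k) (inter_subset_frontier_union_frontier hint ⟨hx, hxk⟩)
    exact (infDist_zero_of_mem hmem).trans_le infDist_nonneg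
  · rw [hfr hxk]
    exact infDist_le_infDist_of_subset (hsub k)
      (frontier_nonempty_of_infDist_eq hk hxk (hfr hxk))

theorem infDist_iUnion_frontier_le_hausdorffDist {A : ι → Set X} {C : Set X} {i k : ι} {x : X}
    (hint : Disjoint (interior (A i)) (interior (A k))) (hx : x ∈ A i) (hxC : x ∈ C)
    (hfin : hausdorffEDist C (A k) ≠ ⊤)
    (hfr : x ∉ A k → infDist x (A k) = infDist x (frontier (A k))) :
    infDist x (⋃ l, frontier (A l)) ≤ hausdorffDist C (A k) :=
  have hk : (A k).Nonempty := nonempty_of_hausdorffEDist_ne_top ⟨x, hxC⟩ hfin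
  (infDist_iUnion_frontier_le_infDist hint hx hk hfr).trans
    (infDist_le_hausdorffDist_of_mem hxC hfin)

theorem points_in_crossed_pieces_close_to_sepLines_general {P Q : ι → Set X}
    (hPint : ∀ i k, i ≠ k → Disjoint (interior (P i)) (interior (P k)))
    (hQint : ∀ i k, i ≠ k → Disjoint (interior (Q i)) (interior (Q k)))
    (hPfr : ∀ k, ∀ y ∉ P k, infDist y (P k) = infDist y (frontier (P k)))
    (hQfr : ∀ k, ∀ y ∉ Q k, infDist y (Q k) = infDist y (frontier (Q k)))
    (hfin : ∀ k, hausdorffEDist (Q k) (P k) ≠ ⊤)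
    {ε : ℝ} (hd : ∀ k, hausdorffDist (Q k) (P k) < ε)
    {i i' : ι} (hne : i ≠ i') {x : X} (hxP : x ∈ P i) (hxQ : x ∈ Q i') :
    infDist x (⋃ k, frontier (P k)) < ε ∧ infDist x (⋃ k, frontier (Q k)) < ε := by
  constructor
  · calc
      infDist x (⋃ k, frontier (P k)) ≤ hausdorffDist (Q i') (P i') :=
        infDist_iUnion_frontier_le_hausdorffDist (hPint i i' hne) hxP hxQ (hfin i') (hPfr i' x)
      _ < ε := hd i'
  · have hfin' : hausdorffEDist (P i) (Q i) ≠ ⊤ := hausdorffEDist_comm.trans_ne (hfin i)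
    calc
      infDist x (⋃ k, frontier (Q k)) ≤ hausdorffDist (P i) (Q i) :=
        infDist_iUnion_frontier_le_hausdorffDist (hQint i' i hne.symm) hxQ hxP hfin' (hQfr i x)
      _ = hausdorffDist (Q i) (P i) := hausdorffDist_comm
      _ < ε := hd i

end PseudoMetricSpace

namespace PWC.IsFinPartition

variable {X : Type} [MetricSpace X] {m : ℕ} {P : Fin m → Set X}

theorem disjoint_interior (hP : IsFinPartition P) (i k : Fin m) (hik : i ≠ k) :
    Disjoint (interior (P i)) (interior (P k)) :=
  Set.disjoint_iff_inter_eq_empty.2 (hP.2.2.2 i k hik)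

theorem hausdorffEDist_ne_top {m' : ℕ} {Q : Fin m' → Set X} (hP : IsFinPartition P)
    (hQ : IsFinPartition Q) (i : Fin m) (k : Fin m') :
    Metric.hausdorffEDist (P i) (Q k) ≠ ⊤ :=
  Metric.hausdorffEDist_ne_top_of_nonempty_of_bounded (hP.1 i) (hQ.1 k)
    (hP.2.1 i).isBounded (hQ.2.1 k).isBounded

end PWC.IsFinPartition

/-- Proposition, second part: If `d(P, P̂) < ε` then every point of
`B_i ∩ A_j` with `i ≠ j` is within `ε` of both separation lines. -/
theorem points_in_crossed_pieces_close_to_sepLines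
    {n m : ℕ} {X : Type} [MetricSpace X]
    (j : X → EuclideanSpace ℝ (Fin n))
    (hj : Topology.IsEmbedding j)
    (hball : Nonempty (X ≃ₜ (Metric.closedBall (0 : EuclideanSpace ℝ (Fin n)) 1)))
    (hfr : ∀ (M : Set X) (y : X), y ∉ M →
      Metric.infDist y M = Metric.infDist y (frontier M))
    (P Q : Fin m → Set X) (hP : IsFinPartition P) (hQ : IsFinPartition Q)
    (ε : ℝ) (hd : ∀ i, Metric.hausdorffDist (Q i) (P i) < ε) :
    ∀ i i' : Fin m, i ≠ i' → ∀ pt ∈ P i ∩ Q i',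
      Metric.infDist pt (sepLine P) < ε ∧ Metric.infDist pt (sepLine Q) < ε :=
  fun _ _ hne _ ⟨hxP, hxQ⟩ =>
    points_in_crossed_pieces_close_to_sepLines_general hP.disjoint_interior hQ.disjoint_interior
      (fun k => hfr (P k)) (fun k => hfr (Q k)) (fun k => hQ.hausdorffEDist_ne_top hP k k) hd
      hne hxP hxQ
end

section
/- Let F = {f_i : B_i → int(B)} be a piecewise continuous map on (B,{B_i}) with the separation property, and let F⁻¹ : F(B) → B be its (well-defined, continuous) inverse, where F(B) = ∪_i f_i(B_i) and F⁻¹(z) = f_i⁻¹(z) for z ∈ f_i(B_i). Then for every x₀ ∈ B and every future orbit o⁺(x₀) of x₀, the limit set L = L⁺(o⁺(x₀)) satisfies L ⊆ F(B) and is invariant: the image of L under F⁻¹ equals L, i.e. F⁻¹(L) = L. -/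
open PWC

/-!
The graph of the multivalued map `F` is a finite union of graphs of continuous maps on compact
sets, so it is compact. Let `L` be the limit set of an orbit. The pairs `(x_k, x_{k+1})` lie in this
compact graph, so a cluster point of either coordinate extends to a cluster point of the pairs that
lies in the graph. A sequence and its shift have the same cluster points, hence every point of `L`
is related by `F` both to a successor in `L` and to a predecessor in `L`. As `F⁻¹` sends a point of
`F(B)` to its only predecessor, these two facts say that `L ⊆ F⁻¹(L)` and `F⁻¹(L) ⊆ L`.
-/

open Filter Topology

section CompactRelation

variable {α X Y : Type*} [TopologicalSpace X] [TopologicalSpace Y] {l : Filter α}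
  {u : α → X} {v : α → Y}

theorem exists_mapClusterPt_fst_of_isCompact [T2Space Y] {R : SetRel X Y} (hR : IsCompact R)
    (huv : ∀ᶠ a in l, (u a, v a) ∈ R) {y : Y} (hy : MapClusterPt y l v) :
    ∃ x, MapClusterPt x l u ∧ (x, y) ∈ R := by
  obtain ⟨U, hUl, hvy⟩ := mapClusterPt_iff_ultrafilter.1 hy
  obtain ⟨⟨x, y'⟩, hxy', hlim⟩ :=
    hR.ultrafilter_le_nhds' (U.map fun a => (u a, v a)) (huv.filter_mono hUl)
  have hux : Tendsto u U (𝓝 x) := (continuous_fst.tendsto (x, y')).comp hlim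
  have hvy' : Tendsto v U (𝓝 y') := (continuous_snd.tendsto (x, y')).comp hlim
  obtain rfl : y' = y := tendsto_nhds_unique hvy' hvy
  exact ⟨x, mapClusterPt_iff_ultrafilter.2 ⟨U, hUl, hux⟩, hxy'⟩

theorem exists_mapClusterPt_snd_of_isCompact [T2Space X] {R : SetRel X Y} (hR : IsCompact R)
    (huv : ∀ᶠ a in l, (u a, v a) ∈ R) {x : X} (hx : MapClusterPt x l u) :
    ∃ y, MapClusterPt y l v ∧ (x, y) ∈ R :=
  exists_mapClusterPt_fst_of_isCompact (R := R.inv)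
    ((Homeomorph.prodComm Y X).isCompact_preimage.2 hR) huv hx

end CompactRelation

section ClusterSet

variable {X : Type*} [TopologicalSpace X]

/-- The set of cluster points of a sequence, playing the role of the limit set of an orbit in
spaces that need not be first countable. -/
def clusterSet (o : ℕ → X) : Set X := {y | MapClusterPt y atTop o}

theorem mapClusterPt_add_one_iff {o : ℕ → X} {y : X} :
    MapClusterPt y atTop (fun k => o (k + 1)) ↔ MapClusterPt y atTop o := by
  change MapClusterPt y atTop (o ∘ (· + 1)) ↔ _
  rw [mapClusterPt_comp, map_add_atTop_eq_nat]

theorem clusterSet_subset_image [T2Space X] {R : SetRel X X} (hR : IsCompact R) {o : ℕ → X}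
    (ho : ∀ᶠ k in atTop, (o k, o (k + 1)) ∈ R) : clusterSet o ⊆ R.image (clusterSet o) :=
  fun _ hz => exists_mapClusterPt_fst_of_isCompact hR ho (mapClusterPt_add_one_iff.2 hz)

theorem clusterSet_subset_preimage [T2Space X] {R : SetRel X X} (hR : IsCompact R) {o : ℕ → X}
    (ho : ∀ᶠ k in atTop, (o k, o (k + 1)) ∈ R) : clusterSet o ⊆ R.preimage (clusterSet o) :=
  fun _ hy =>
    let ⟨z, hz, hyz⟩ := exists_mapClusterPt_snd_of_isCompact hR ho hy
    ⟨z, mapClusterPt_add_one_iff.1 hz, hyz⟩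

end ClusterSet

theorem orbitLimit_eq_clusterSet {X : Type} [MetricSpace X] (o : ℕ → X) :
    orbitLimit o = clusterSet o :=
  Set.Subset.antisymm
    (fun _ ⟨_, hφ, hlim⟩ => hlim.mapClusterPt.of_comp hφ.tendsto_atTop)
    fun _ hy => hy.tendsto_subseq

theorem image_eq_of_subset_image_of_subset_preimage {X : Type*} {R : SetRel X X} {g : X → X}
    {L : Set X} (hg : ∀ x y, (x, y) ∈ R → g y = x) (himage : L ⊆ R.image L)
    (hpreimage : L ⊆ R.preimage L) : g '' L = L := by
  apply Set.Subset.antisymm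
  · rintro _ ⟨z, hz, rfl⟩
    obtain ⟨x, hx, hxz⟩ := himage hz
    rwa [hg x z hxz]
  · intro y hy
    obtain ⟨z, hz, hyz⟩ := hpreimage hy
    exact ⟨z, hz, hg y z hyz⟩

section PiecewiseGraph

variable {ι X Y : Type*}

/-- The graph of the multivalued map `F(x) = {f i x : x ∈ P i}`, as a relation. -/
def piecewiseGraph (P : ι → Set X) (f : ι → X → Y) : SetRel X Y :=
  ⋃ i, (P i).graphOn (f i)

theorem mem_piecewiseGraph {P : ι → Set X} {f : ι → X → Y} {x : X} {y : Y} :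
    (x, y) ∈ piecewiseGraph P f ↔ ∃ i, x ∈ P i ∧ f i x = y := by
  simp only [piecewiseGraph, Set.mem_iUnion, Set.mem_graphOn]

theorem isCompact_piecewiseGraph [Finite ι] [TopologicalSpace X] [TopologicalSpace Y]
    {P : ι → Set X} {f : ι → X → Y} (hP : ∀ i, IsCompact (P i))
    (hf : ∀ i, ContinuousOn (f i) (P i)) : IsCompact (piecewiseGraph P f) :=
  isCompact_iUnion fun i => (hP i).image_of_continuousOn (continuousOn_id.prodMk (hf i))

end PiecewiseGraph

theorem orbitLimit_invariant_general {ι X : Type*} [Finite ι] [TopologicalSpace X] [T2Space X]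
    {P : ι → Set X} {f : ι → X → X} (hP : ∀ i, IsCompact (P i))
    (hf : ∀ i, ContinuousOn (f i) (P i)) {Finv : X → X}
    (hFinv : ∀ i, ∀ x ∈ P i, Finv (f i x) = x) {o : ℕ → X}
    (ho : ∀ᶠ k in atTop, ∃ i, o k ∈ P i ∧ o (k + 1) = f i (o k)) :
    clusterSet o ⊆ ⋃ i, f i '' P i ∧ Finv '' clusterSet o = clusterSet o := by
  have hcompact : IsCompact (piecewiseGraph P f) := isCompact_piecewiseGraph hP hf
  have horbit : ∀ᶠ k in atTop, (o k, o (k + 1)) ∈ piecewiseGraph P f := by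
    simpa only [mem_piecewiseGraph, eq_comm] using ho
  have himage := clusterSet_subset_image hcompact horbit
  refine ⟨fun z hz => ?_, image_eq_of_subset_image_of_subset_preimage ?_ himage
    (clusterSet_subset_preimage hcompact horbit)⟩
  · obtain ⟨x, -, hxz⟩ := himage hz
    obtain ⟨i, hx, hfx⟩ := mem_piecewiseGraph.1 hxz
    exact Set.mem_iUnion.2 ⟨i, x, hx, hfx⟩
  · intro x y hxy
    obtain ⟨i, hx, rfl⟩ := mem_piecewiseGraph.1 hxy
    exact hFinv i x hx

/-- For a piecewise continuous map with the separation property, the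
limit set `L` of any future orbit satisfies `L ⊆ F(B)` and `F⁻¹(L) = L`. -/
theorem orbitLimit_invariant
    {n m : ℕ} {X : Type} [MetricSpace X]
    (j : X → EuclideanSpace ℝ (Fin n))
    (hj : Topology.IsEmbedding j)
    (hball : Nonempty (X ≃ₜ (Metric.closedBall (0 : EuclideanSpace ℝ (Fin n)) 1)))
    (P : Fin m → Set X) (f : Fin m → X → X)
    (hP : IsFinPartition P) (hf : IsPCMap j P f) (hsep : SepProp P f)
    (Finv : X → X) (hFinv : ∀ i, ∀ x ∈ P i, Finv (f i x) = x) :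
    ∀ o : ℕ → X, IsOrbit P f o →
      orbitLimit o ⊆ setImage P f Set.univ ∧ Finv '' orbitLimit o = orbitLimit o := by
  intro o ho
  simpa only [orbitLimit_eq_clusterSet, setImage, Set.inter_univ] using
    orbitLimit_invariant_general hP.2.1 (fun i => (hf i).1) hFinv (.of_forall ho)
end
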